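/- Let Φ = {log φ_n}_{n≥1} be a subadditive potential over (X,T) and β(Φ) := sup{χ(μ,Φ) : μ ∈ M(X,T)}. Then the supremum is attained, and it is attained at some T-ergodic invariant measure; i.e. there exists a T-ergodic μ ∈ M(X,T) with χ(μ,Φ) = β(Φ) (a Lyapunov maximizing measure). -/

import Mathlib

open MeasureTheory Filter Topology
open scoped ENNReal

/-- The empirical probability measure `γ_{n+1,x} = (1/(n+1)) ∑_{j≤n} δ_{T^j x}` of the orbit
of `x` (indexed so that it is a probability measure for every index). -/
noncomputable def empiricalPM {X : Type*} [MeasurableSpace X] (T : X → X) (x : X) (n : ℕ) :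
    MeasureTheory.ProbabilityMeasure X :=
  ⟨(n + 1 : ℝ≥0∞)⁻¹ • ∑ j ∈ Finset.range (n + 1), MeasureTheory.Measure.dirac (T^[j] x), by
    constructor
    rw [Measure.smul_apply, Measure.finset_sum_apply]
    simp
    rw [ENNReal.inv_mul_cancel] <;> simp⟩

/-- The set `V(x)` of weak* limit points of the sequence of empirical measures of `x`. -/
def limitSet {X : Type*} [MeasurableSpace X] [TopologicalSpace X] [OpensMeasurableSpace X]
    (T : X → X) (x : X) : Set (MeasureTheory.ProbabilityMeasure X) :=
  {μ | ∃ φ : ℕ → ℕ, StrictMono φ ∧ Tendsto (fun j => empiricalPM T x (φ j)) atTop (𝓝 μ)}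

/-- `μ` is an observable (physical-like) measure for `(X, T, Leb)`: every weak* neighbourhood
`U` of `μ` (equivalently, every ε-ball around `μ` in a compatible metric) is intersected by
`V(x)` for a positive `Leb`-measure set of points `x`. -/
def IsObservable {X : Type*} [MeasurableSpace X] [TopologicalSpace X] [OpensMeasurableSpace X]
    (Leb : MeasureTheory.Measure X) (T : X → X) (μ : MeasureTheory.ProbabilityMeasure X) : Prop :=
  ∀ U : Set (MeasureTheory.ProbabilityMeasure X), IsOpen U → μ ∈ U →
    0 < Leb {x | (limitSet T x ∩ U).Nonempty}

/-- The Lyapunov exponent `χ(μ, Φ) = lim_n (1/n) ∫ log φ_n dμ` of a potential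
`Φ = {log φ_n}` (for invariant `μ` the limit exists by subadditivity, so it equals the
`liminf` used here); it takes values in `[-∞, ∞)`, i.e. in `EReal`. -/
noncomputable def lyapExp {X : Type*} [MeasurableSpace X] (φ : ℕ → X → ℝ)
    (μ : MeasureTheory.Measure X) : EReal :=
  liminf (fun n : ℕ => (((n : ℝ)⁻¹ * ∫ x, Real.log (φ n x) ∂μ : ℝ) : EReal)) atTop

/-!
By Fekete's lemma the Lyapunov exponent of an invariant measure is the infimum of its finite-time
exponents, each continuous and affine in the measure. Hence it is an upper semicontinuous function
on the compact set `M(X, T)`, nonempty by Krylov–Bogoliubov, so its maximum is attained; and being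
affine, it attains it on a face of `M(X, T)`. By Krein–Milman this compact face has an extreme
point, which is then extreme in `M(X, T)`, that is, ergodic.
-/

theorem tendsto_inv_mul_iInf_of_subadditive {u : ℕ → ℝ}
    (hu : ∀ m n, 1 ≤ m → 1 ≤ n → u (m + n) ≤ u m + u n) :
    Tendsto (fun n : ℕ ↦ (((n : ℝ)⁻¹ * u n : ℝ) : EReal)) atTop
      (𝓝 (⨅ (n : ℕ) (_ : n ≥ 1), (((n : ℝ)⁻¹ * u n : ℝ) : EReal))) := by
  -- `Subadditive` also constrains `u 0`, which is unrestricted here and does not affect the limit.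
  have hsub : Subadditive (Function.update u 0 0) := by
    intro m n
    rcases m.eq_zero_or_pos with rfl | hm
    · simp
    rcases n.eq_zero_or_pos with rfl | hn
    · simp
    simpa [hm.ne', hn.ne'] using hu m n hm hn
  refine tendsto_order.2 ⟨fun l hl ↦ ?_, fun L hL ↦ ?_⟩
  · filter_upwards [eventually_ge_atTop 1] with n hn
    exact hl.trans_le (iInf₂_le n hn)
  · obtain ⟨r, hr, hrL⟩ := EReal.lt_iff_exists_real_btwn.1 hL
    obtain ⟨n, hn, hnr⟩ : ∃ n : ℕ, 1 ≤ n ∧ (n : ℝ)⁻¹ * u n < r := by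
      simpa only [iInf_lt_iff, EReal.coe_lt_coe_iff, exists_prop] using hr
    have hn₀ : n ≠ 0 := by lia
    have hlt := hsub.eventually_div_lt_of_div_lt hn₀ (L := r)
      (by simpa [hn₀, div_eq_inv_mul] using hnr)
    filter_upwards [hlt, eventually_ne_atTop 0] with k hk hk₀
    refine (EReal.coe_lt_coe_iff.2 ?_).trans hrL
    simpa [hk₀, div_eq_inv_mul] using hk

theorem isCompact_setOf_isMaxOn {α γ : Type*} [TopologicalSpace α] [LinearOrder γ] {s : Set α}
    {f : α → γ} (hs : IsCompact s) (hf : UpperSemicontinuousOn f s) :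
    IsCompact {x ∈ s | IsMaxOn f s x} := by
  rcases {x ∈ s | IsMaxOn f s x}.eq_empty_or_nonempty with hempty | ⟨x₀, hx₀, hmax⟩
  · exact hempty ▸ isCompact_empty
  · convert hf.isCompact_inter_preimage_Ici hs (f x₀) using 1
    ext x
    exact ⟨fun ⟨hx, h⟩ ↦ ⟨hx, h hx₀⟩, fun ⟨hx, h⟩ ↦ ⟨hx, fun y hy ↦ (hmax hy).trans h⟩⟩

theorem isExtreme_setOf_isMaxOn {E : Type*} [AddCommMonoid E] [SMul ℝ≥0∞ E] {A : Set E}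
    {χ : E → EReal} (htop : ∀ x ∈ A, χ x ≠ ⊤)
    (hconv : ∀ x ∈ A, ∀ y ∈ A, ∀ a b : ℝ≥0∞, a + b = 1 →
      χ (a • x + b • y) ≤ a * χ x + b * χ y) :
    IsExtreme ℝ≥0∞ A {x ∈ A | IsMaxOn χ A x} := by
  refine ⟨Set.sep_subset _ _, ?_⟩
  rintro x hx y hy z ⟨hz, hmax⟩ ⟨a, b, ha, hb, hab, hxy⟩
  suffices χ z ≤ χ x from ⟨hx, fun w hw ↦ (hmax hw).trans this⟩
  by_contra! hlt
  obtain ⟨ha_top, hb_top⟩ := ENNReal.add_ne_top.1 (hab.trans_ne ENNReal.one_ne_top)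
  obtain ⟨r, hxr, hrz⟩ := EReal.lt_iff_exists_real_btwn.1 hlt
  obtain ⟨c, hc⟩ : ∃ c : ℝ, χ z = c :=
    ⟨_, (EReal.coe_toReal (htop z hz) (bot_le.trans_lt hlt).ne').symm⟩
  have hyc : χ y ≤ c := (hmax hy).trans_eq hc
  lift a to NNReal using ha_top
  lift b to NNReal using hb_top
  have hab' : (a : ℝ) + b = 1 := by exact_mod_cast hab
  have ha' : (0 : ℝ) < a := by exact_mod_cast ha
  have hrc : r < c := by rwa [hc, EReal.coe_lt_coe_iff] at hrz
  have hle : (c : EReal) ≤ ((a * r + b * c : ℝ) : EReal) :=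
    calc (c : EReal) = χ ((a : ℝ≥0∞) • x + (b : ℝ≥0∞) • y) := by rw [hxy, hc]
      _ ≤ (a : ℝ≥0∞) * χ x + (b : ℝ≥0∞) * χ y := hconv x hx y hy a b hab
      _ ≤ (a : ℝ≥0∞) * r + (b : ℝ≥0∞) * c := by gcongr
      _ = ((a * r + b * c : ℝ) : EReal) := by norm_cast
  have hgt : a * r + b * c < c :=
    calc a * r + b * c < a * c + b * c := by gcongr
      _ = c := by rw [← add_mul, hab', one_mul]
  exact (EReal.coe_le_coe_iff.1 hle).not_gt hgt

theorem integral_add_smul_measure {X E : Type*} [MeasurableSpace X] [NormedAddCommGroup E]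
    [NormedSpace ℝ E] {ν₁ ν₂ : Measure X} {f : X → E} (h₁ : Integrable f ν₁)
    (h₂ : Integrable f ν₂) {a b : ℝ≥0∞} (ha : a ≠ ∞) (hb : b ≠ ∞) :
    ∫ x, f x ∂(a • ν₁ + b • ν₂) = a.toReal • ∫ x, f x ∂ν₁ + b.toReal • ∫ x, f x ∂ν₂ := by
  rw [integral_add_measure (h₁.smul_measure ha) (h₂.smul_measure hb), integral_smul_measure,
    integral_smul_measure]

section InvariantMeasures

variable {X : Type*} [MeasurableSpace X] {T : X → X}

/-- The set `M(X, T)` of `T`-invariant probability measures. It is a set of measures, rather than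
of bundled probability measures, because convex combinations live in `Measure X`; topological
statements concern its preimage in `ProbabilityMeasure X`. -/
def invariantMeasures (T : X → X) : Set (Measure X) :=
  {μ | MeasurePreserving T μ μ ∧ IsProbabilityMeasure μ}

theorem isMaxOn_invariantMeasures_iff {β : Type*} [Preorder β] {f : Measure X → β}
    {μ : ProbabilityMeasure X} :
    IsMaxOn f (invariantMeasures T) μ ↔
      IsMaxOn (fun ν : ProbabilityMeasure X ↦ f ν)
        {ν | (ν : Measure X) ∈ invariantMeasures T} μ :=
  ⟨fun h _ hν ↦ h hν, fun h ν hν ↦ h (a := ⟨ν, hν.2⟩) hν⟩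

theorem integral_empiricalPM {E : Type*} [NormedAddCommGroup E] [NormedSpace ℝ E]
    [CompleteSpace E] {g : X → E} (hg : StronglyMeasurable g) (x : X) (n : ℕ) :
    ∫ y, g y ∂(empiricalPM T x n : Measure X) = birkhoffAverage ℝ T g (n + 1) x := by
  change ∫ y, g y ∂((n + 1 : ℝ≥0∞)⁻¹ • ∑ j ∈ Finset.range (n + 1), Measure.dirac (T^[j] x)) = _
  have hint (j : ℕ) : Integrable g (Measure.dirac (T^[j] x)) :=
    integrable_dirac' hg enorm_lt_top
  rw [integral_smul_measure, integral_finsetSum_measure fun j _ ↦ hint j]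
  simp [birkhoffAverage, birkhoffSum, integral_dirac' _ _ hg, ENNReal.toReal_add]

variable [TopologicalSpace X] [HasOuterApproxClosed X] [BorelSpace X]

theorem mem_invariantMeasures_of_tendsto_empiricalPM (hT : Continuous T) {x : X} {l : Filter ℕ}
    [l.NeBot] (hl : l ≤ atTop) {μ : ProbabilityMeasure X}
    (hμ : Tendsto (empiricalPM T x) l (𝓝 μ)) : (μ : Measure X) ∈ invariantMeasures T := by
  refine ⟨⟨hT.measurable, ?_⟩, inferInstance⟩
  have := Measure.isProbabilityMeasure_map (μ := (μ : Measure X)) hT.measurable.aemeasurable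
  refine ext_of_forall_integral_eq_of_IsFiniteMeasure fun f ↦ ?_
  rw [integral_map hT.measurable.aemeasurable f.continuous.aestronglyMeasurable]
  have hlim (g : BoundedContinuousFunction X ℝ) :
      Tendsto (fun n ↦ birkhoffAverage ℝ T g (n + 1) x) l (𝓝 (∫ y, g y ∂(μ : Measure X))) := by
    simp only [← integral_empiricalPM g.continuous.stronglyMeasurable]
    exact ((ProbabilityMeasure.continuous_integral_boundedContinuousFunction g).tendsto μ).comp hμ
  have hcomm (n : ℕ) : birkhoffAverage ℝ T (f.compContinuous ⟨T, hT⟩) n x =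
      birkhoffAverage ℝ T f n (T x) := by
    simp [birkhoffAverage, birkhoffSum, (Function.Commute.refl T).iterate_right _ |>.eq]
  have hshift : Tendsto (fun n ↦ birkhoffAverage ℝ T (f.compContinuous ⟨T, hT⟩) (n + 1) x -
      birkhoffAverage ℝ T f (n + 1) x) l (𝓝 0) := by
    simp only [hcomm]
    exact ((tendsto_birkhoffAverage_apply_sub_birkhoffAverage' ℝ f.isBounded_range T x).comp
      (tendsto_add_atTop_nat 1)).mono_left hl
  exact sub_eq_zero.1 (tendsto_nhds_unique ((hlim _).sub (hlim f)) hshift)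

theorem invariantMeasures_nonempty [CompactSpace X] [T2Space X] [Nonempty X]
    (hT : Continuous T) : (invariantMeasures T).Nonempty := by
  obtain ⟨x⟩ := ‹Nonempty X›
  obtain ⟨μ, hμ⟩ := exists_clusterPt_of_compactSpace (map (empiricalPM T x) atTop)
  obtain ⟨U, hU, hUμ⟩ := mapClusterPt_iff_ultrafilter.1 hμ
  exact ⟨μ, mem_invariantMeasures_of_tendsto_empiricalPM hT hU hUμ⟩

theorem isClosed_setOf_mem_invariantMeasures (hT : Continuous T) :
    IsClosed {μ : ProbabilityMeasure X | (μ : Measure X) ∈ invariantMeasures T} := by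
  have hfix (μ : ProbabilityMeasure X) : (μ : Measure X) ∈ invariantMeasures T ↔
      μ.map hT.measurable.aemeasurable = μ := by
    refine .trans ?_ (Subtype.ext_iff (a1 := μ.map hT.measurable.aemeasurable)).symm
    exact ⟨fun h ↦ h.1.map_eq, fun h ↦ ⟨⟨hT.measurable, h⟩, inferInstance⟩⟩
  simp only [hfix]
  exact isClosed_eq (ProbabilityMeasure.continuous_map hT) continuous_id

-- Krein–Milman cannot be applied in `Measure X`, which is not a vector space: it is applied to the
-- functionals that the measures induce on bounded continuous functions.
theorem extremePoints_measure_nonempty_of_isCompact {F : Set (Measure X)}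
    (hprob : ∀ μ ∈ F, IsProbabilityMeasure μ)
    (hF : IsCompact {μ : ProbabilityMeasure X | (μ : Measure X) ∈ F}) (hne : F.Nonempty) :
    (F.extremePoints ℝ≥0∞).Nonempty := by
  let L (μ : Measure X) (f : BoundedContinuousFunction X ℝ) : ℝ := ∫ x, f x ∂μ
  have hL : Continuous fun μ : ProbabilityMeasure X ↦ L μ :=
    continuous_pi ProbabilityMeasure.continuous_integral_boundedContinuousFunction
  have himage : (fun μ : ProbabilityMeasure X ↦ L μ) '' {μ | (μ : Measure X) ∈ F} = L '' F := by
    ext y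
    exact ⟨fun ⟨μ, hμ, h⟩ ↦ ⟨μ, hμ, h⟩, fun ⟨μ, hμ, h⟩ ↦ ⟨⟨μ, hprob μ hμ⟩, hμ, h⟩⟩
  have hcompact : IsCompact (L '' F) := himage ▸ hF.image hL
  obtain ⟨_, ⟨μ, hμ, rfl⟩, hext⟩ := hcompact.extremePoints_nonempty (hne.image L)
  refine ⟨μ, hμ, ?_⟩
  rintro ν₁ h₁ ν₂ h₂ ⟨a, b, ha, hb, hab, rfl⟩
  have := hprob _ hμ
  have := hprob ν₁ h₁
  have := hprob ν₂ h₂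
  obtain ⟨ha_top, hb_top⟩ := ENNReal.add_ne_top.1 (hab.trans_ne ENNReal.one_ne_top)
  have hsegment : L (a • ν₁ + b • ν₂) ∈ openSegment ℝ (L ν₁) (L ν₂) := by
    refine ⟨a.toReal, b.toReal, ENNReal.toReal_pos ha.ne' ha_top,
      ENNReal.toReal_pos hb.ne' hb_top, by simp [← ENNReal.toReal_add ha_top hb_top, hab], ?_⟩
    funext f
    exact (integral_add_smul_measure (f.integrable ν₁) (f.integrable ν₂) ha_top hb_top).symm
  exact ext_of_forall_integral_eq_of_IsFiniteMeasure <|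
    congrFun (hext (Set.mem_image_of_mem L h₁) (Set.mem_image_of_mem L h₂) hsegment)

theorem exists_ergodic_mem_of_isExtreme {F : Set (Measure X)}
    (hF : IsExtreme ℝ≥0∞ (invariantMeasures T) F)
    (hcompact : IsCompact {μ : ProbabilityMeasure X | (μ : Measure X) ∈ F}) (hne : F.Nonempty) :
    ∃ μ ∈ F, Ergodic T μ := by
  obtain ⟨μ, hμ⟩ :=
    extremePoints_measure_nonempty_of_isCompact (fun μ hμ ↦ (hF.subset hμ).2) hcompact hne
  exact ⟨μ, hμ.1, .of_mem_extremePoints (hF.extremePoints_subset_extremePoints hμ)⟩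

end InvariantMeasures

section LyapunovExponent

/-- The finite-time Lyapunov exponent `(1/n) ∫ log φ_n dμ`, with value `0` at the junk time
`n = 0`. -/
noncomputable def finiteTimeLyapExp {X : Type*} [MeasurableSpace X] (φ : ℕ → X → ℝ) (n : ℕ)
    (μ : Measure X) : ℝ :=
  (n : ℝ)⁻¹ * ∫ x, Real.log (φ n x) ∂μ

variable {X : Type*} [TopologicalSpace X] {T : X → X} {φ : ℕ → X → ℝ}

/-- `Φ = {log φ_n}_{n ≥ 1}` is a subadditive potential over `(X, T)`; nothing is assumed of
`φ 0`. -/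
structure IsSubadditivePotential (T : X → X) (φ : ℕ → X → ℝ) : Prop where
  continuous : ∀ n, 1 ≤ n → Continuous (φ n)
  pos : ∀ n, 1 ≤ n → ∀ x, 0 < φ n x
  le_mul : ∀ m n, 1 ≤ m → 1 ≤ n → ∀ x, φ (m + n) x ≤ φ m x * φ n (T^[m] x)

namespace IsSubadditivePotential

theorem continuous_log (hφ : IsSubadditivePotential T φ) {n : ℕ} (hn : 1 ≤ n) :
    Continuous fun x ↦ Real.log (φ n x) :=
  (hφ.continuous n hn).log fun x ↦ (hφ.pos n hn x).ne'

theorem log_le_add (hφ : IsSubadditivePotential T φ) {m n : ℕ} (hm : 1 ≤ m) (hn : 1 ≤ n) (x : X) :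
    Real.log (φ (m + n) x) ≤ Real.log (φ m x) + Real.log (φ n (T^[m] x)) := by
  rw [← Real.log_mul (hφ.pos m hm x).ne' (hφ.pos n hn _).ne']
  exact Real.log_le_log (hφ.pos _ (by lia) x) (hφ.le_mul m n hm hn x)

variable [CompactSpace X] [MeasurableSpace X]

section OpensMeasurableSpace

variable [OpensMeasurableSpace X] {μ : Measure X}

theorem integrable_log [IsFiniteMeasure μ] (hφ : IsSubadditivePotential T φ) {n : ℕ}
    (hn : 1 ≤ n) : Integrable (fun x ↦ Real.log (φ n x)) μ :=
  (hφ.continuous_log hn).integrable_of_hasCompactSupport (.of_compactSpace _)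

theorem integral_log_le_add [IsFiniteMeasure μ] (hφ : IsSubadditivePotential T φ)
    (hμ : MeasurePreserving T μ μ) {m n : ℕ} (hm : 1 ≤ m) (hn : 1 ≤ n) :
    ∫ x, Real.log (φ (m + n) x) ∂μ ≤ ∫ x, Real.log (φ m x) ∂μ + ∫ x, Real.log (φ n x) ∂μ := by
  have hTm : MeasurePreserving T^[m] μ μ := hμ.iterate m
  have hshift : Integrable (fun x ↦ Real.log (φ n (T^[m] x))) μ :=
    hTm.integrable_comp_of_integrable (hφ.integrable_log hn)
  calc ∫ x, Real.log (φ (m + n) x) ∂μ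
      ≤ ∫ x, (Real.log (φ m x) + Real.log (φ n (T^[m] x))) ∂μ :=
        integral_mono (hφ.integrable_log (by lia)) ((hφ.integrable_log hm).add hshift)
          (hφ.log_le_add hm hn)
    _ = ∫ x, Real.log (φ m x) ∂μ + ∫ x, Real.log (φ n (T^[m] x)) ∂μ :=
        integral_add (hφ.integrable_log hm) hshift
    _ = ∫ x, Real.log (φ m x) ∂μ + ∫ x, Real.log (φ n x) ∂μ := by
        congr 1
        conv_rhs => rw [← hTm.map_eq]
        exact (integral_map hTm.measurable.aemeasurable
          (hφ.continuous_log hn).aestronglyMeasurable).symm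

theorem tendsto_finiteTimeLyapExp_iInf [IsFiniteMeasure μ] (hφ : IsSubadditivePotential T φ)
    (hμ : MeasurePreserving T μ μ) :
    Tendsto (fun n ↦ (finiteTimeLyapExp φ n μ : EReal)) atTop
      (𝓝 (⨅ n ≥ 1, (finiteTimeLyapExp φ n μ : EReal))) :=
  tendsto_inv_mul_iInf_of_subadditive fun _ _ ↦ hφ.integral_log_le_add hμ

theorem lyapExp_eq_iInf [IsFiniteMeasure μ] (hφ : IsSubadditivePotential T φ)
    (hμ : MeasurePreserving T μ μ) :
    lyapExp φ μ = ⨅ n ≥ 1, (finiteTimeLyapExp φ n μ : EReal) :=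
  (hφ.tendsto_finiteTimeLyapExp_iInf hμ).liminf_eq

theorem tendsto_finiteTimeLyapExp [IsFiniteMeasure μ] (hφ : IsSubadditivePotential T φ)
    (hμ : MeasurePreserving T μ μ) :
    Tendsto (fun n ↦ (finiteTimeLyapExp φ n μ : EReal)) atTop (𝓝 (lyapExp φ μ)) :=
  hφ.lyapExp_eq_iInf hμ ▸ hφ.tendsto_finiteTimeLyapExp_iInf hμ

theorem lyapExp_ne_top [IsFiniteMeasure μ] (hφ : IsSubadditivePotential T φ)
    (hμ : MeasurePreserving T μ μ) : lyapExp φ μ ≠ ⊤ := by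
  rw [hφ.lyapExp_eq_iInf hμ]
  exact ((iInf₂_le 1 le_rfl).trans_lt (EReal.coe_lt_top _)).ne

theorem finiteTimeLyapExp_add_smul (hφ : IsSubadditivePotential T φ) {ν₁ ν₂ : Measure X}
    [IsFiniteMeasure ν₁] [IsFiniteMeasure ν₂] {a b : ℝ≥0∞} (ha : a ≠ ∞) (hb : b ≠ ∞) {n : ℕ}
    (hn : 1 ≤ n) :
    finiteTimeLyapExp φ n (a • ν₁ + b • ν₂) =
      a.toReal * finiteTimeLyapExp φ n ν₁ + b.toReal * finiteTimeLyapExp φ n ν₂ := by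
  simp only [finiteTimeLyapExp]
  rw [integral_add_smul_measure (hφ.integrable_log hn) (hφ.integrable_log hn) ha hb,
    smul_eq_mul, smul_eq_mul]
  ring

theorem lyapExp_add_smul (hφ : IsSubadditivePotential T φ) {ν₁ ν₂ : Measure X}
    [IsFiniteMeasure ν₁] [IsFiniteMeasure ν₂] (h₁ : MeasurePreserving T ν₁ ν₁)
    (h₂ : MeasurePreserving T ν₂ ν₂) {a b : ℝ≥0∞} (ha : a ≠ ∞) (hb : b ≠ ∞) :
    lyapExp φ (a • ν₁ + b • ν₂) = a * lyapExp φ ν₁ + b * lyapExp φ ν₂ := by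
  have hmul {ν : Measure X} [IsFiniteMeasure ν] (hν : MeasurePreserving T ν ν) {c : ℝ≥0∞}
      (hc : c ≠ ∞) : Tendsto (fun n ↦ (c : EReal) * finiteTimeLyapExp φ n ν) atTop
        (𝓝 (c * lyapExp φ ν)) :=
    EReal.Tendsto.const_mul (hφ.tendsto_finiteTimeLyapExp hν) (.inl (by simp)) (.inl (by simpa))
  have hne_top {ν : Measure X} [IsFiniteMeasure ν] (hν : MeasurePreserving T ν ν) {c : ℝ≥0∞}
      (hc : c ≠ ∞) : (c : EReal) * lyapExp φ ν ≠ ⊤ := by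
    simp [EReal.mul_ne_top, EReal.coe_ennreal_nonneg, hφ.lyapExp_ne_top hν, hc]
  have hlim := (EReal.continuousAt_add (p := (a * lyapExp φ ν₁, b * lyapExp φ ν₂))
    (.inl (hne_top h₁ ha)) (.inr (hne_top h₂ hb))).tendsto.comp
      ((hmul h₁ ha).prodMk_nhds (hmul h₂ hb))
  refine (hlim.congr' ?_).liminf_eq
  filter_upwards [eventually_ge_atTop 1] with n hn
  lift a to NNReal using ha
  lift b to NNReal using hb
  change _ = (finiteTimeLyapExp φ n _ : EReal)
  rw [hφ.finiteTimeLyapExp_add_smul ENNReal.coe_ne_top ENNReal.coe_ne_top hn]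
  norm_cast

theorem upperSemicontinuousOn_lyapExp (hφ : IsSubadditivePotential T φ) :
    UpperSemicontinuousOn (fun μ : ProbabilityMeasure X ↦ lyapExp φ μ)
      {μ | (μ : Measure X) ∈ invariantMeasures T} := by
  have hcont (n : ℕ) (hn : n ≥ 1) :
      Continuous fun μ : ProbabilityMeasure X ↦ (finiteTimeLyapExp φ n μ : EReal) :=
    continuous_coe_real_ereal.comp <| continuous_const.mul <|
      ProbabilityMeasure.continuous_integral_continuousMap
        (⟨_, hφ.continuous_log hn⟩ : C(X, ℝ))
  have hinf : UpperSemicontinuous fun μ : ProbabilityMeasure X ↦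
      ⨅ n ≥ 1, (finiteTimeLyapExp φ n μ : EReal) :=
    upperSemicontinuous_biInf fun n hn ↦ (hcont n hn).upperSemicontinuous
  intro μ hμ
  exact (hinf.upperSemicontinuousOn _ μ hμ).congr_of_eventuallyEq hμ <|
    eventually_mem_nhdsWithin.mono fun ν hν y ↦
      iff_of_eq <| congrArg (· < y) (hφ.lyapExp_eq_iInf hν.1).symm

theorem isExtreme_setOf_isMaxOn_lyapExp (hφ : IsSubadditivePotential T φ) :
    IsExtreme ℝ≥0∞ (invariantMeasures T)
      {μ ∈ invariantMeasures T | IsMaxOn (lyapExp φ) (invariantMeasures T) μ} := by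
  refine isExtreme_setOf_isMaxOn (fun μ ⟨hμ, _⟩ ↦ hφ.lyapExp_ne_top hμ) ?_
  rintro ν₁ ⟨h₁, _⟩ ν₂ ⟨h₂, _⟩ a b hab
  obtain ⟨ha_top, hb_top⟩ := ENNReal.add_ne_top.1 (hab.trans_ne ENNReal.one_ne_top)
  exact (hφ.lyapExp_add_smul h₁ h₂ ha_top hb_top).le

end OpensMeasurableSpace

variable [T2Space X] [HasOuterApproxClosed X] [BorelSpace X]

theorem exists_isMaxOn_lyapExp [Nonempty X] (hφ : IsSubadditivePotential T φ)
    (hT : Continuous T) :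
    ∃ μ ∈ invariantMeasures T, IsMaxOn (lyapExp φ) (invariantMeasures T) μ := by
  obtain ⟨ν, hν⟩ := invariantMeasures_nonempty hT
  obtain ⟨μ, hμ, hmax⟩ := hφ.upperSemicontinuousOn_lyapExp.exists_isMaxOn
    ⟨⟨ν, hν.2⟩, hν⟩ (isClosed_setOf_mem_invariantMeasures hT).isCompact
  exact ⟨μ, hμ, isMaxOn_invariantMeasures_iff.2 hmax⟩

theorem isCompact_setOf_isMaxOn_lyapExp (hφ : IsSubadditivePotential T φ) (hT : Continuous T) :
    IsCompact {μ : ProbabilityMeasure X | (μ : Measure X) ∈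
      {μ ∈ invariantMeasures T | IsMaxOn (lyapExp φ) (invariantMeasures T) μ}} := by
  simp only [Set.mem_ofPred_eq, isMaxOn_invariantMeasures_iff]
  exact isCompact_setOf_isMaxOn (isClosed_setOf_mem_invariantMeasures hT).isCompact
    hφ.upperSemicontinuousOn_lyapExp

end IsSubadditivePotential

end LyapunovExponent

theorem exists_ergodic_lyapunov_maximizing_general
    {X : Type*} [TopologicalSpace X] [CompactSpace X] [T2Space X] [HasOuterApproxClosed X]
    [Nonempty X] [MeasurableSpace X] [BorelSpace X] {T : X → X} (hT : Continuous T)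
    {φ : ℕ → X → ℝ} (hφ : IsSubadditivePotential T φ) :
    ∃ μ : ProbabilityMeasure X, Ergodic T (μ : Measure X) ∧
      lyapExp φ (μ : Measure X) =
        sSup {c : EReal | ∃ ν : ProbabilityMeasure X,
          (ν : Measure X).map T = (ν : Measure X) ∧ c = lyapExp φ (ν : Measure X)} := by
  obtain ⟨μ, ⟨⟨hμT, _⟩, hmax⟩, hergodic⟩ :=
    exists_ergodic_mem_of_isExtreme hφ.isExtreme_setOf_isMaxOn_lyapExp
      (hφ.isCompact_setOf_isMaxOn_lyapExp hT) (hφ.exists_isMaxOn_lyapExp hT)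
  let μ' : ProbabilityMeasure X := ⟨μ, inferInstance⟩
  refine ⟨μ', hergodic, le_antisymm (le_sSup ⟨μ', hμT.map_eq, rfl⟩) (sSup_le ?_)⟩
  rintro _ ⟨ν, hν, rfl⟩
  exact hmax (a := (ν : Measure X)) ⟨⟨hT.measurable, hν⟩, inferInstance⟩

/-- **Existence of Lyapunov maximizing measures.** For a subadditive potential
`Φ = {log φ_n}` over a continuous map `T` of a (nonempty) compact metric space `X`, the
supremum `β(Φ) = sup {χ(μ,Φ) : μ ∈ M(X,T)}` is attained, and it is attained at some
`T`-ergodic invariant measure. -/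
theorem exists_ergodic_lyapunov_maximizing
    {X : Type*} [MetricSpace X] [CompactSpace X] [Nonempty X]
    [MeasurableSpace X] [BorelSpace X]
    (T : X → X) (hT : Continuous T)
    (φ : ℕ → X → ℝ)
    (hcont : ∀ n, 1 ≤ n → Continuous (φ n))
    (hpos : ∀ n, 1 ≤ n → ∀ x, 0 < φ n x)
    (hsub : ∀ m n, 1 ≤ m → 1 ≤ n → ∀ x, φ (m + n) x ≤ φ m x * φ n (T^[m] x)) :
    ∃ μ : ProbabilityMeasure X, Ergodic T (μ : Measure X) ∧
      lyapExp φ (μ : Measure X) =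
        sSup {c : EReal | ∃ ν : ProbabilityMeasure X,
          (ν : Measure X).map T = (ν : Measure X) ∧ c = lyapExp φ (ν : Measure X)} :=
  exists_ergodic_lyapunov_maximizing_general hT ⟨hcont, hpos, hsub⟩
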